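/- Let K be a field of characteristic zero, let r_1, ..., r_k be distinct nonzero elements of K, and let p = x^{m_0} * prod_{i=1}^k (x - r_i)^{m_i} in K[x] with integers m_i >= 1 for 1 <= i <= k and m_0 >= 0. Let c_j denote the codegree-j coefficient of p (c_0 = 1), let c = (c_1, ..., c_k)^T, let m = (m_1, ..., m_k)^T (multiplicities viewed as elements of K), let V_0 be the k-by-k matrix with (i,j) entry r_j^i for 1 <= i, j <= k, let C be the k-by-k lower-triangular Toeplitz matrix with (i,j) entry c_{i-j} when i >= j and 0 otherwise, and let Lambda = -diag(1, 1/2, ..., 1/k). Then the matrix Lambda * C * V_0 is invertible and m = (Lambda * C * V_0)^{-1} * c. -/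

import Mathlib

open Polynomial Finset Matrix

/-!
The polynomial of codegree coefficients of `p` is its reverse, `q = ∏ i, (1 - r i X) ^ m i`. Its
logarithmic derivative is `-∑ i, m i * r i / (1 - r i X)`; comparing the coefficients of `X ^ n` in
`q' = q * (q' / q)` gives Newton's identities, which read `c = Λ C V₀ m` in matrix form. The three
factors have determinants `(-1) ^ k / k!`, `1` and `∏ i, r i` times a Vandermonde determinant.
-/

section Derivation

variable {R A ι : Type*} [CommSemiring R] [CommSemiring A] [Algebra R A]

lemma derivation_pow_of_eq_mul (D : Derivation R A A) {f g : A} (h : D f = f * g) (n : ℕ) :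
    D (f ^ n) = f ^ n * (n * g) := by
  induction n with
  | zero => simp
  | succ n ih =>
    rw [pow_succ, D.leibniz, h, ih, smul_eq_mul, smul_eq_mul]
    push_cast
    ring

lemma derivation_prod_of_eq_mul (D : Derivation R A A) {s : Finset ι} {f g : ι → A}
    (h : ∀ i ∈ s, D (f i) = f i * g i) :
    D (∏ i ∈ s, f i) = (∏ i ∈ s, f i) * ∑ i ∈ s, g i := by
  induction s using Finset.cons_induction with
  | empty => simp
  | cons a s ha ih =>
    rw [forall_mem_cons] at h
    rw [prod_cons, sum_cons, D.leibniz, h.1, ih h.2, smul_eq_mul, smul_eq_mul]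
    ring

end Derivation

section Reverse

variable {R ι : Type*}

lemma reverse_mul_of_monic [Semiring R] {f g : R[X]} (hf : f.Monic) (hg : g.Monic) :
    (f * g).reverse = f.reverse * g.reverse := by
  nontriviality R
  exact reverse_mul (by simp [hf.leadingCoeff, hg.leadingCoeff])

lemma reverse_pow_of_monic [Semiring R] {f : R[X]} (hf : f.Monic) (n : ℕ) :
    (f ^ n).reverse = f.reverse ^ n := by
  induction n with
  | zero => simpa using reverse_C (1 : R)
  | succ n ih => rw [pow_succ, pow_succ, reverse_mul_of_monic (hf.pow n) hf, ih]

lemma reverse_prod_of_monic [CommSemiring R] {s : Finset ι} {f : ι → R[X]}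
    (hf : ∀ i ∈ s, (f i).Monic) :
    (∏ i ∈ s, f i).reverse = ∏ i ∈ s, (f i).reverse := by
  induction s using Finset.cons_induction with
  | empty => simpa using reverse_C (1 : R)
  | cons a s ha ih =>
    rw [forall_mem_cons] at hf
    rw [prod_cons, prod_cons, reverse_mul_of_monic hf.1 (monic_prod_of_monic _ _ hf.2), ih hf.2]

lemma reverse_X_sub_C [Ring R] (a : R) : (X - C a).reverse = 1 - C a * X := by
  nontriviality R
  have h_X : (X : R[X]).reverse = 1 := by
    rw [← mul_one X, reverse_X_mul, ← C_1, reverse_C]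
  rw [sub_eq_add_neg, ← C_neg, reverse_add_C, h_X, natDegree_X, pow_one, C_neg, neg_mul,
    ← sub_eq_add_neg]

variable [CommRing R] (s : Finset ι) (r : ι → R) (m : ι → ℕ) (m₀ : ℕ)

lemma monic_prod_X_sub_C_pow : (∏ i ∈ s, (X - C (r i)) ^ m i).Monic :=
  monic_prod_of_monic _ _ fun i _ => (monic_X_sub_C (r i)).pow (m i)

lemma natDegree_X_pow_mul_prod_X_sub_C_pow [Nontrivial R] :
    (X ^ m₀ * ∏ i ∈ s, (X - C (r i)) ^ m i).natDegree = m₀ + ∑ i ∈ s, m i := by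
  rw [(monic_X_pow m₀).natDegree_mul (monic_prod_X_sub_C_pow s r m), natDegree_X_pow,
    natDegree_prod_of_monic _ _ fun i _ => (monic_X_sub_C (r i)).pow (m i)]
  simp only [(monic_X_sub_C _).natDegree_pow, natDegree_X_sub_C, mul_one]

lemma reverse_X_pow_mul_prod_X_sub_C_pow :
    (X ^ m₀ * ∏ i ∈ s, (X - C (r i)) ^ m i).reverse = ∏ i ∈ s, (1 - C (r i) * X) ^ m i := by
  rw [reverse_X_pow_mul, reverse_prod_of_monic fun i _ => (monic_X_sub_C (r i)).pow (m i)]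
  simp only [reverse_pow_of_monic (monic_X_sub_C _), reverse_X_sub_C]

end Reverse

section Newton

variable {R ι : Type*} [CommRing R]

lemma one_sub_C_mul_X_mul_mk_pow_succ (a : R) :
    (1 - PowerSeries.C a * PowerSeries.X) * PowerSeries.mk (fun n => a ^ (n + 1)) =
      PowerSeries.C a := by
  ext n
  rw [sub_mul, one_mul, mul_assoc]
  cases n <;> simp [PowerSeries.coeff_C, PowerSeries.coeff_succ_X_mul, pow_succ']

lemma derivative_prod_one_sub_C_mul_X_pow (s : Finset ι) (r : ι → R) (m : ι → ℕ) :
    PowerSeries.derivative R (∏ i ∈ s, (1 - PowerSeries.C (r i) * PowerSeries.X) ^ m i) =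
      -((∏ i ∈ s, (1 - PowerSeries.C (r i) * PowerSeries.X) ^ m i) *
        PowerSeries.mk fun n => ∑ i ∈ s, m i * r i ^ (n + 1)) := by
  have h_factor (i : ι) : PowerSeries.derivative R (1 - PowerSeries.C (r i) * PowerSeries.X) =
      (1 - PowerSeries.C (r i) * PowerSeries.X) * -PowerSeries.mk fun n => r i ^ (n + 1) := by
    rw [mul_neg, one_sub_C_mul_X_mul_mk_pow_succ]
    simp [Derivation.leibniz]
  have h_sum : ∑ i ∈ s, (m i : PowerSeries R) * -PowerSeries.mk (fun n => r i ^ (n + 1)) =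
      -PowerSeries.mk fun n => ∑ i ∈ s, m i * r i ^ (n + 1) := by
    ext n
    simp only [← map_natCast (PowerSeries.C (R := R)), mul_neg, sum_neg_distrib, map_neg, map_sum,
      PowerSeries.coeff_C_mul, PowerSeries.coeff_mk]
  rw [derivation_prod_of_eq_mul _ fun i _ => derivation_pow_of_eq_mul _ (h_factor i) (m i),
    h_sum, mul_neg]

theorem succ_mul_coeff_reverse_succ (s : Finset ι) (r : ι → R) (m : ι → ℕ) (m₀ : ℕ) {p : R[X]}
    (hp : p = X ^ m₀ * ∏ i ∈ s, (X - C (r i)) ^ m i) (n : ℕ) :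
    (n + 1) * p.reverse.coeff (n + 1) =
      -∑ x ∈ antidiagonal n, p.reverse.coeff x.1 * ∑ i ∈ s, m i * r i ^ (x.2 + 1) := by
  have h_coe : (p.reverse : PowerSeries R) =
      ∏ i ∈ s, (1 - PowerSeries.C (r i) * PowerSeries.X) ^ m i := by
    rw [hp, reverse_X_pow_mul_prod_X_sub_C_pow, ← coeToPowerSeries.ringHom_apply, map_prod]
    simp
  have h_deriv := derivative_prod_one_sub_C_mul_X_pow s r m
  rw [← h_coe] at h_deriv
  simpa [PowerSeries.coeff_derivative, PowerSeries.coeff_mul, mul_comm] using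
    congrArg (PowerSeries.coeff n) h_deriv

end Newton

section Matrices

variable {R : Type*}

/-- The `k × k` lower triangular Toeplitz matrix with first column `a 0, …, a (k - 1)`; for `a` the
codegree coefficients of a polynomial it is the matrix `C`. -/
def lowerToeplitz [Zero R] (k : ℕ) (a : ℕ → R) : Matrix (Fin k) (Fin k) R :=
  of fun i j => if (j : ℕ) ≤ i then a (i - j) else 0

lemma lowerToeplitz_mulVec_apply [NonUnitalNonAssocSemiring R] {k : ℕ} (a b : ℕ → R) (i : Fin k) :
    (lowerToeplitz k a *ᵥ fun j => b j) i = ∑ x ∈ antidiagonal (i : ℕ), a x.1 * b x.2 := by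
  have h_range : (range k).filter (· ≤ (i : ℕ)) = range (i + 1) := by
    ext j
    simp only [mem_filter, mem_range]
    omega
  simp only [lowerToeplitz, mulVec, dotProduct, of_apply, ite_mul, zero_mul]
  rw [Fin.sum_univ_eq_sum_range (fun j => if j ≤ (i : ℕ) then a (i - j) * b j else 0),
    ← sum_filter, h_range, ← Finset.Nat.sum_antidiagonal_swap,
    Finset.Nat.sum_antidiagonal_eq_sum_range_succ_mk]
  simp only [Prod.swap_prod_mk]

lemma det_lowerToeplitz [CommRing R] (k : ℕ) (a : ℕ → R) : (lowerToeplitz k a).det = a 0 ^ k := by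
  have h_lower : (lowerToeplitz k a).IsLowerTriangular := fun i j hij =>
    if_neg (not_le.mpr hij)
  rw [det_of_isLowerTriangular _ h_lower]
  simp [lowerToeplitz]

/-- The matrix `V₀` whose rows are the first `k` positive powers of `r`, starting from the first
power rather than the zeroth. -/
def shiftedVandermonde {ι : Type*} [Monoid R] (k : ℕ) (r : ι → R) : Matrix (Fin k) ι R :=
  of fun i j => r j ^ ((i : ℕ) + 1)

lemma det_shiftedVandermonde [CommRing R] {k : ℕ} (r : Fin k → R) :
    (shiftedVandermonde k r).det = (vandermonde r).det * ∏ i, r i := by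
  have h : shiftedVandermonde k r = (vandermonde r)ᵀ * diagonal r := by
    ext i j
    rw [mul_diagonal, transpose_apply, vandermonde_apply, shiftedVandermonde, of_apply, pow_succ]
  rw [h, det_mul, det_transpose, det_diagonal]

/-- The matrix `Λ = -diag(1, 1/2, …, 1/k)`. -/
def negInvDiagonal (K : Type*) [Field K] (k : ℕ) : Matrix (Fin k) (Fin k) K :=
  diagonal fun i => -(1 / (((i : ℕ) + 1 : ℕ) : K))

lemma det_negInvDiagonal (K : Type*) [Field K] (k : ℕ) :
    (negInvDiagonal K k).det = (-1) ^ k / (k.factorial : K) := by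
  rw [negInvDiagonal, det_diagonal, prod_neg, card_univ, Fintype.card_fin, prod_div_distrib,
    prod_const_one, mul_one_div, Fin.prod_univ_eq_prod_range (fun i => ((i + 1 : ℕ) : K)),
    ← Nat.cast_prod, prod_range_add_one_eq_factorial]

lemma lowerToeplitz_mulVec_shiftedVandermonde_mulVec {ι : Type*} [CommRing R] [Fintype ι] (k : ℕ)
    (r : ι → R) (m : ι → ℕ) (m₀ : ℕ) {p : R[X]}
    (hp : p = X ^ m₀ * ∏ i, (X - C (r i)) ^ m i) :
    lowerToeplitz k p.reverse.coeff *ᵥ (shiftedVandermonde k r *ᵥ fun i => (m i : R)) =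
      fun j : Fin k => -((j + 1 : ℕ) * p.reverse.coeff (j + 1)) := by
  have h_powerSum : (shiftedVandermonde k r *ᵥ fun i => (m i : R)) =
      fun j : Fin k => ∑ i, m i * r i ^ ((j : ℕ) + 1) := by
    ext j
    simp only [shiftedVandermonde, mulVec, dotProduct, of_apply, mul_comm]
  ext j
  rw [h_powerSum, lowerToeplitz_mulVec_apply _ fun n => ∑ i, m i * r i ^ (n + 1), Nat.cast_succ,
    succ_mul_coeff_reverse_succ univ r m m₀ hp, neg_neg]

end Matrices

/-- The codegree-`n` coefficient of `p` is written `p.reverse.coeff n`, which is `0` for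
`n > p.natDegree`, whereas `p.coeff (p.natDegree - n)` would then be the constant term. -/
theorem multiplicity_formula_general {K : Type*} [Field K] {k : ℕ} (hk : (k.factorial : K) ≠ 0)
    (r : Fin k → K) (hr : Function.Injective r) (hr0 : ∀ i, r i ≠ 0) (m : Fin k → ℕ) (m₀ : ℕ)
    {p : K[X]} (hp : p = X ^ m₀ * ∏ i, (X - C (r i)) ^ m i) :
    IsUnit (negInvDiagonal K k * lowerToeplitz k p.reverse.coeff * shiftedVandermonde k r) ∧
      (fun i => (m i : K)) =
        (negInvDiagonal K k * lowerToeplitz k p.reverse.coeff * shiftedVandermonde k r)⁻¹ *ᵥ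
          fun j : Fin k => p.reverse.coeff (j + 1) := by
  set A := negInvDiagonal K k * lowerToeplitz k p.reverse.coeff * shiftedVandermonde k r with hA
  have h_monic : p.Monic := hp ▸ (monic_X_pow m₀).mul (monic_prod_X_sub_C_pow univ r m)
  have h_det : IsUnit A.det := by
    rw [hA, det_mul, det_mul, det_negInvDiagonal, det_lowerToeplitz, det_shiftedVandermonde,
      coeff_zero_reverse, h_monic.leadingCoeff, one_pow, mul_one]
    exact (mul_ne_zero (div_ne_zero (by simp) hk) (mul_ne_zero
      (det_vandermonde_ne_zero_iff.mpr hr) (prod_ne_zero_iff.mpr fun i _ => hr0 i))).isUnit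
  have h_mulVec : A *ᵥ (fun i => (m i : K)) = fun j : Fin k => p.reverse.coeff (j + 1) := by
    rw [hA, ← mulVec_mulVec, ← mulVec_mulVec,
      lowerToeplitz_mulVec_shiftedVandermonde_mulVec k r m m₀ hp]
    ext j
    have hj : (((j : ℕ) + 1 : ℕ) : K) ≠ 0 := fun h =>
      hk (zero_dvd_iff.mp (h ▸ Nat.cast_dvd_cast (Nat.dvd_factorial j.1.succ_pos j.2)))
    rw [negInvDiagonal, mulVec_diagonal, neg_mul_neg, one_div, inv_mul_cancel_left₀ hj]
  refine ⟨(isUnit_iff_isUnit_det A).mpr h_det, ?_⟩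
  rw [← h_mulVec, mulVec_mulVec, nonsing_inv_mul A h_det, one_mulVec]

/-- The explicit formula `m = (Λ C V₀)⁻¹ c` from the proof of Theorem 1:
the multiplicity vector is recovered from the first `k` proper leading
coefficients via the shifted Vandermonde matrix `V₀`, the Toeplitz matrix `C`
of leading coefficients and `Λ = -diag(1, 1/2, …, 1/k)`. -/
theorem multiplicity_formula
    {K : Type*} [Field K] [CharZero K] {k : ℕ}
    (r : Fin k → K) (hr : Function.Injective r) (hr0 : ∀ i, r i ≠ 0)
    (m : Fin k → ℕ) (hm : ∀ i, 1 ≤ m i) (m0 : ℕ)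
    (p : K[X]) (hp : p = X ^ m0 * ∏ i, (X - C (r i)) ^ m i)
    (c : Fin k → K) (hc : ∀ j : Fin k, c j = p.coeff (p.natDegree - ((j : ℕ) + 1)))
    (V0 : Matrix (Fin k) (Fin k) K)
    (hV0 : ∀ i j : Fin k, V0 i j = r j ^ ((i : ℕ) + 1))
    (Cm : Matrix (Fin k) (Fin k) K)
    (hCm : ∀ i j : Fin k, Cm i j =
      if (j : ℕ) ≤ (i : ℕ) then p.coeff (p.natDegree - ((i : ℕ) - (j : ℕ))) else 0)
    (Λ : Matrix (Fin k) (Fin k) K)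
    (hΛ : Λ = Matrix.diagonal fun i : Fin k => -(1 / (((i : ℕ) + 1 : ℕ) : K))) :
    IsUnit (Λ * Cm * V0) ∧
      (fun i : Fin k => (m i : K)) = (Λ * Cm * V0)⁻¹ *ᵥ c := by
  have h_coeff (n : ℕ) (hn : n ≤ k) : p.coeff (p.natDegree - n) = p.reverse.coeff n := by
    have hk : k ≤ ∑ i, m i := by simpa using card_nsmul_le_sum univ m 1 fun i _ => hm i
    have h_deg := hp ▸ natDegree_X_pow_mul_prod_X_sub_C_pow univ r m m0
    rw [coeff_reverse, revAt_le (by omega)]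
  rw [hΛ, show V0 = shiftedVandermonde k r from Matrix.ext hV0,
    show Cm = lowerToeplitz k p.reverse.coeff from
      Matrix.ext fun i j => by rw [hCm, h_coeff _ (by omega)]; rfl,
    show c = fun j : Fin k => p.reverse.coeff (j + 1) from
      funext fun j => by rw [hc, h_coeff _ (by omega)]]
  exact multiplicity_formula_general (Nat.cast_ne_zero.mpr k.factorial_ne_zero) r hr hr0 m m0 hp
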